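/- arXiv:2603.04012 — 5 statements merged into one kernel-verified Lean document; each statement's English description precedes it below -/
import Mathlib

section
/- For every interaction sequence (V, φ), any two distinct definite segments are either disjoint or one is contained well inside the other (i.e., the definite segments form a nest structure: for distinct definite segments S(k) and S(l), either S(k) ∩ S(l) = ∅, or S(k) is contained in the interior part of S(l) in the sense that both endpoints of one segment lie strictly between the endpoints of the other, or vice versa). -/
/-!
Since `φ 1 = 0`, the index `0` is never definite, so only positive indices matter. The key fact
(`mem_V_of_definite`) is that for definite `k > 0` and every `n > k`, no element of `V n` lies in
`[φ k, k)`. This holds for `V (k+1) = {k} ∪ V (φ k)`, and is inherited by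
`V (n+1) = {n} ∪ V (φ n)`: as `φ n ≠ k`, either `φ n > k` and induction applies to `V (φ n)`, or
`φ n < φ k` and all of `V (φ n)` lies below `φ k`. For `l > k` the element `φ l ∈ V l` is then
either above `k` (disjoint segments) or below `φ k` (nested segments).
-/

/-- An interaction sequence: `V n ⊆ [0,n)`, `φ n ∈ V n` for `n > 0`,
`V 1 = {0}` and `V (n+1) = {n} ∪ V (φ n)` for `n > 0`. -/
structure InteractionSeq (V : ℕ → Finset ℕ) (φ : ℕ → ℕ) : Prop where
  sub : ∀ n, V n ⊆ Finset.range n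
  phi_mem : ∀ n, 0 < n → φ n ∈ V n
  V_one : V 1 = {0}
  V_succ : ∀ n, 0 < n → V (n + 1) = insert n (V (φ n))

/-- The segment `S k = [φ k, k]` for `k > 0`, and `S 0 = [0,0]`. -/
def Seg (φ : ℕ → ℕ) (k : ℕ) : Finset ℕ :=
  if k = 0 then {0} else Finset.Icc (φ k) k

/-- The left endpoint of the segment `S k`. -/
def segLeft (φ : ℕ → ℕ) (k : ℕ) : ℕ :=
  if k = 0 then 0 else φ k

/-- A segment `S k` is definite if `k` is not in the image of `φ`
(restricted to positive arguments). -/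
def Definite (φ : ℕ → ℕ) (k : ℕ) : Prop :=
  ¬ ∃ m, 0 < m ∧ φ m = k

theorem InteractionSeq.lt_of_mem {V : ℕ → Finset ℕ} {φ : ℕ → ℕ} (h : InteractionSeq V φ)
    {n x : ℕ} (hx : x ∈ V n) : x < n :=
  Finset.mem_range.mp (h.sub n hx)

theorem InteractionSeq.pos_of_definite {V : ℕ → Finset ℕ} {φ : ℕ → ℕ} (h : InteractionSeq V φ)
    {k : ℕ} (hk : Definite φ k) : 0 < k := by
  rcases Nat.eq_zero_or_pos k with rfl | hpos
  · exact absurd ⟨1, one_pos, Nat.lt_one_iff.mp (h.lt_of_mem (h.phi_mem 1 one_pos))⟩ hk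
  · exact hpos

theorem InteractionSeq.mem_V_of_definite {V : ℕ → Finset ℕ} {φ : ℕ → ℕ}
    (h : InteractionSeq V φ) {k : ℕ} (hk : Definite φ k) (n : ℕ) (hn : k < n) {x : ℕ}
    (hx : x ∈ V n) : k ≤ x ∨ x < φ k := by
  induction n using Nat.strong_induction_on generalizing x with
  | _ n ih =>
    have hkpos := h.pos_of_definite hk
    obtain ⟨m, rfl⟩ : ∃ m, n = m + 1 := ⟨n - 1, by omega⟩
    have hm : 0 < m := by omega
    rw [h.V_succ m hm, Finset.mem_insert] at hx
    rcases hx with rfl | hx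
    · left; omega
    have hxlt := h.lt_of_mem hx
    rcases Nat.eq_or_lt_of_le (Nat.le_of_lt_succ hn) with rfl | hkm
    · exact Or.inr hxlt
    have hphi := h.phi_mem m hm
    have hphilt := h.lt_of_mem hphi
    have hne : φ m ≠ k := fun e => hk ⟨m, hm, e⟩
    rcases ih m (by omega) hkm hphi with hge | hlt
    · exact ih (φ m) (by omega) (by omega) hx
    · right; omega

theorem InteractionSeq.nest_of_lt {V : ℕ → Finset ℕ} {φ : ℕ → ℕ} (h : InteractionSeq V φ)
    {k l : ℕ} (hk : Definite φ k) (hkl : k < l) :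
    Seg φ k ∩ Seg φ l = ∅ ∨ (segLeft φ l < segLeft φ k ∧ k < l) := by
  have hkpos := h.pos_of_definite hk
  have hl : 0 < l := by omega
  have hne : φ l ≠ k := fun e => hk ⟨l, hl, e⟩
  simp only [Seg, segLeft, if_neg hkpos.ne', if_neg hl.ne']
  rcases h.mem_V_of_definite hk l hkl (h.phi_mem l hl) with hge | hlt
  · left
    ext x
    simp only [Finset.mem_inter, Finset.mem_Icc, Finset.notMem_empty, iff_false]
    omega
  · exact Or.inr ⟨hlt, hkl⟩

/-- Distinct definite segments are either disjoint or one lies well inside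
the other (its endpoints strictly between those of the other). -/
theorem definite_segments_nest (V : ℕ → Finset ℕ) (φ : ℕ → ℕ)
    (h : InteractionSeq V φ) (k l : ℕ) (hk : Definite φ k) (hl : Definite φ l)
    (hkl : k ≠ l) :
    Seg φ k ∩ Seg φ l = ∅ ∨
    (segLeft φ l < segLeft φ k ∧ k < l) ∨
    (segLeft φ k < segLeft φ l ∧ l < k) := by
  rcases Nat.lt_or_gt_of_ne hkl with hlt | hgt
  · rcases h.nest_of_lt hk hlt with hd | hn
    · exact Or.inl hd
    · exact Or.inr (Or.inl hn)
  · rcases h.nest_of_lt hl hgt with hd | hn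
    · exact Or.inl ((Finset.inter_comm _ _).trans hd)
    · exact Or.inr (Or.inr hn)
end

section
/- For every interaction sequence (V, φ) defined on all of ℕ (an infinite interaction sequence), there exists a strictly increasing sequence of natural numbers n_0 < n_1 < n_2 < ⋯ such that φ(n_{k+1}) = n_k + 1 for all k, and the segments S(n_0), S(n_1), S(n_2), … form a partition of [0, ω) = ℕ (i.e., the segments are pairwise disjoint and their union is all of ℕ). -/
namespace InteractionSeq

variable {V : ℕ → Finset ℕ} {φ : ℕ → ℕ}

/-- `m` points to `k`: one step of the justification tree, from child to parent. -/
def Points (φ : ℕ → ℕ) (m k : ℕ) : Prop := 0 < m ∧ φ m = k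

/-- The segment of `b` starts right after `a`. -/
def Next (φ : ℕ → ℕ) (a b : ℕ) : Prop := 0 < b ∧ φ b = a + 1

/-- `D` is a kernel of the pointer relation: `k` is in `D` iff no pointer to `k` is in `D`. -/
def IsKernel (φ : ℕ → ℕ) (D : ℕ → Prop) : Prop :=
  ∀ k, D k ↔ ∀ m, Points φ m k → ¬ D m

/-- `m` lies in no segment of `D` whose right end is a proper descendant of `k` in the pointer
tree. -/
def Live (φ : ℕ → ℕ) (D : ℕ → Prop) (k m : ℕ) : Prop :=
  ∀ s, D s → Relation.TransGen (Points φ) s k → φ s ≤ m → m ≤ s → False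

theorem phi_lt (h : InteractionSeq V φ) {n : ℕ} (hn : 0 < n) : φ n < n :=
  Finset.mem_range.1 (h.sub n (h.phi_mem n hn))

theorem lt_of_mem_s1 (h : InteractionSeq V φ) {b n : ℕ} (hb : b ∈ V n) : b < n :=
  Finset.mem_range.1 (h.sub n hb)

theorem reach_of_mem (h : InteractionSeq V φ) (m : ℕ) :
    ∀ x, x ∈ V (m + 1) → Relation.ReflTransGen (Next φ) x m := by
  induction m using Nat.strong_induction_on with
  | _ m ih =>
    intro x hx
    rcases Nat.eq_zero_or_pos m with rfl | hm
    · rw [h.V_one, Finset.mem_singleton] at hx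
      rw [hx]
    · rw [h.V_succ m hm, Finset.mem_insert] at hx
      rcases hx with rfl | hx
      · exact .refl
      · have h1 := h.lt_of_mem_s1 hx
        have h2 := h.phi_lt hm
        obtain ⟨c, hc⟩ : ∃ c, φ m = c + 1 := ⟨φ m - 1, by omega⟩
        exact (ih c (by omega) x (hc ▸ hx)).tail ⟨hm, hc⟩

theorem exists_root (h : InteractionSeq V φ) (x : ℕ) :
    ∃ r, (r = 0 ∨ φ r = 0) ∧ Relation.ReflTransGen (Next φ) r x := by
  induction x using Nat.strong_induction_on with
  | _ x ih =>
    by_cases hx : x = 0 ∨ φ x = 0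
    · exact ⟨x, hx, .refl⟩
    · push Not at hx
      have hp : 0 < x := Nat.pos_of_ne_zero hx.1
      have h2 := h.phi_lt hp
      obtain ⟨c, hc⟩ : ∃ c, φ x = c + 1 := ⟨φ x - 1, by omega⟩
      obtain ⟨r, hr, hrc⟩ := ih c (by omega)
      exact ⟨r, hr, hrc.tail ⟨hp, hc⟩⟩

/-- A set `M` containing a segment with left end `0` in which every element has a successor yields
the required partition. -/
theorem exists_of_path (h : InteractionSeq V φ) (M : ℕ → Prop)
    (h0 : ∃ r, (r = 0 ∨ φ r = 0) ∧ M r) (hs : ∀ x, M x → ∃ y, Next φ x y ∧ M y) :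
    ∃ n : ℕ → ℕ, StrictMono n ∧
      (∀ k, φ (n (k + 1)) = n k + 1) ∧
      (∀ k l, k ≠ l → Disjoint (Seg φ (n k)) (Seg φ (n l))) ∧
      (∀ m : ℕ, ∃ k, m ∈ Seg φ (n k)) := by
  obtain ⟨r, hr, hMr⟩ := h0
  choose f hf hMf using hs
  let g : ℕ → {x // M x} := fun k => Nat.rec ⟨r, hMr⟩ (fun _ p => ⟨f p.1 p.2, hMf p.1 p.2⟩) k
  let n : ℕ → ℕ := fun k => (g k).1
  have hn0 : n 0 = r := rfl
  have hn : ∀ k, Next φ (n k) (n (k + 1)) := fun k => hf (g k).1 (g k).2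
  have hmono : StrictMono n := by
    refine strictMono_nat_of_lt_succ fun k => ?_
    have h1 := h.phi_lt (hn k).1
    have h2 := (hn k).2
    omega
  have hseg : ∀ k x, x ∈ Seg φ (n (k + 1)) ↔ n k + 1 ≤ x ∧ x ≤ n (k + 1) := by
    intro k x
    rw [Seg, if_neg (hn k).1.ne', Finset.mem_Icc, (hn k).2]
  have hseg0 : ∀ x, x ∈ Seg φ (n 0) ↔ x ≤ n 0 := by
    intro x
    rw [Seg, hn0]
    split_ifs with h1
    · simp [h1]
    · simp [hr.resolve_left h1]
  have hle : ∀ k x, x ∈ Seg φ (n k) → x ≤ n k := by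
    intro k x hx
    cases k with
    | zero => exact (hseg0 x).1 hx
    | succ k => exact ((hseg k x).1 hx).2
  have hdisj : ∀ k l, k < l → Disjoint (Seg φ (n k)) (Seg φ (n l)) := by
    intro k l hkl
    obtain ⟨l, rfl⟩ : ∃ l', l = l' + 1 := ⟨l - 1, by omega⟩
    rw [Finset.disjoint_left]
    intro x hx hx'
    have h1 := hle k x hx
    have h2 := ((hseg l x).1 hx').1
    have h3 := hmono.monotone (show k ≤ l by omega)
    omega
  have hcov : ∀ k x, x ≤ n k → ∃ i, x ∈ Seg φ (n i) := by
    intro k x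
    induction k with
    | zero => exact fun hx => ⟨0, (hseg0 x).2 hx⟩
    | succ k ih =>
      intro hx
      by_cases hxk : x ≤ n k
      · exact ih hxk
      · exact ⟨k + 1, (hseg k x).2 ⟨by omega, hx⟩⟩
  refine ⟨n, hmono, fun k => (hn k).2, fun k l hkl => ?_, fun m => hcov m m (hmono.id_le m)⟩
  rcases lt_or_gt_of_ne hkl with hlt | hlt
  · exact hdisj k l hlt
  · exact (hdisj l k hlt).symm

theorem path_of_branch (h : InteractionSeq V φ) (j : ℕ → ℕ)
    (hj : ∀ i, Points φ (j (i + 1)) (j i)) :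
    ∃ M : ℕ → Prop, (∃ r, (r = 0 ∨ φ r = 0) ∧ M r) ∧ ∀ x, M x → ∃ y, Next φ x y ∧ M y := by
  have hstep : ∀ i, Relation.TransGen (Next φ) (j i) (j (i + 2)) := by
    intro i
    obtain ⟨hp1, hφ1⟩ := hj i
    obtain ⟨hp2, hφ2⟩ := hj (i + 1)
    obtain ⟨c, hc⟩ : ∃ c, j (i + 1) = c + 1 := ⟨j (i + 1) - 1, by omega⟩
    have hmem : j i ∈ V (c + 1) := by
      rw [← hc, ← hφ1]
      exact h.phi_mem _ hp1
    exact Relation.TransGen.tail' (h.reach_of_mem c _ hmem) ⟨hp2, hφ2.trans hc⟩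
  refine ⟨fun x => ∃ i, Relation.ReflTransGen (Next φ) x (j i), ?_, ?_⟩
  · obtain ⟨r, hr, hrj⟩ := h.exists_root (j 0)
    exact ⟨r, hr, 0, hrj⟩
  · rintro x ⟨i, hi⟩
    obtain ⟨y, hxy, hy⟩ := Relation.TransGen.head'_iff.1 (Relation.TransGen.trans_right hi (hstep i))
    exact ⟨y, hxy, i + 2, hy⟩

theorem exists_kernel (hwf : WellFounded (Points φ)) : ∃ D, IsKernel φ D := by
  refine ⟨hwf.fix fun k ih => ∀ m (hm : Points φ m k), ¬ ih m hm, fun k => ?_⟩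
  rw [hwf.fix_eq]

theorem exists_pointer_of_not {D : ℕ → Prop} (hD : IsKernel φ D) {k : ℕ} (hk : ¬ D k) :
    ∃ m, Points φ m k ∧ D m := by
  rw [hD k] at hk
  push Not at hk
  exact hk

theorem lt_of_desc (h : InteractionSeq V φ) {s k : ℕ}
    (hs : Relation.TransGen (Points φ) s k) : k < s := by
  induction hs with
  | single hb => exact hb.2 ▸ h.phi_lt hb.1
  | tail _ hb ih => exact lt_trans (hb.2 ▸ h.phi_lt hb.1) ih

/-- A proper descendant of `k` in the kernel cannot point to `k` itself, so its whole segment lies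
to the right of `k`. -/
theorem lt_phi_of_desc (h : InteractionSeq V φ) {D : ℕ → Prop} (hD : IsKernel φ D) {s k : ℕ}
    (hk : D k) (hDs : D s) (hs : Relation.TransGen (Points φ) s k) : k < φ s := by
  obtain ⟨c, hc, hck⟩ := Relation.TransGen.head'_iff.1 hs
  rcases Relation.reflTransGen_iff_eq_or_transGen.1 hck with rfl | hck
  · exact absurd hDs ((hD _).1 hk s hc)
  · exact hc.2 ▸ h.lt_of_desc hck

/-- `V m` is a path of predecessors; an element `b` of it below `k` is seen either through `k`
or through an element `t` of `V m` whose segment jumps over `k`, that is, `φ t ≤ k < t`. -/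
theorem mem_split (h : InteractionSeq V φ) {k b : ℕ} (hbk : b < k) (m : ℕ) :
    k < m → b ∈ V m → b ∈ V (φ k) ∨ ∃ t ∈ V m, k < t ∧ φ t ≤ k ∧ b ∈ V (φ t) := by
  induction m using Nat.strong_induction_on with
  | _ m ih =>
    intro hkm hb
    obtain ⟨t, rfl⟩ : ∃ t, m = t + 1 := ⟨m - 1, by omega⟩
    have ht : 0 < t := by omega
    have hV := h.V_succ t ht
    have hbt : b ∈ V (φ t) := by
      rw [hV, Finset.mem_insert] at hb
      exact hb.resolve_left (by omega)
    rcases eq_or_lt_of_le (Nat.le_of_lt_succ hkm) with rfl | hkt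
    · exact .inl hbt
    · by_cases hφ : φ t ≤ k
      · exact .inr ⟨t, by simp [hV], hkt, hφ, hbt⟩
      · rcases ih (φ t) (by have := h.phi_lt ht; omega) (by omega) hbt with h1 | ⟨u, hu, h1⟩
        · exact .inl h1
        · exact .inr ⟨u, by simp [hV, hu], h1⟩

/-- From a later position that is not cut out together with a descendant of `k`, nothing in
`[φ k, k)` is visible. -/
theorem invisible (h : InteractionSeq V φ) (hwf : WellFounded (Points φ)) {D : ℕ → Prop}
    (hD : IsKernel φ D) (k : ℕ) :
    D k → ∀ m, k < m → Live φ D k m → ∀ b ∈ V m, φ k ≤ b → b < k → False := by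
  induction k using hwf.transGen.induction with
  | _ k ihk =>
    intro hk m
    induction m using Nat.strong_induction_on with
    | _ m ihm =>
      intro hkm hlive b hb hb1 hb2
      rcases h.mem_split hb2 m hkm hb with hb' | ⟨t, htm, hkt, hφt, hbt⟩
      · have := h.lt_of_mem_s1 hb'
        omega
      have htm' := h.lt_of_mem_s1 htm
      have htpos : 0 < t := by omega
      have htlive : Live φ D k t := by
        intro s hDs hs hst hts
        have hks := h.lt_phi_of_desc hD hk hDs hs
        rcases eq_or_lt_of_le hts with rfl | hts
        · omega
        by_cases hms : m ≤ s
        · exact hlive s hDs hs (by omega) hms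
        · exact ihk s hs hDs m (by omega) (fun s' hDs' hs' => hlive s' hDs' (hs'.trans hs))
            t htm hst hts
      rcases eq_or_lt_of_le hφt with hφt | hφt
      · -- `t` points to `k`, so it is not in `D` and is cut out by a pointer to `t` in `D`.
        have htk : Points φ t k := ⟨htpos, hφt⟩
        obtain ⟨s, hs, hDs⟩ := exists_pointer_of_not hD ((hD k).1 hk t htk)
        have hts : t < s := hs.2 ▸ h.phi_lt hs.1
        exact htlive s hDs (.tail (.single hs) htk) hs.2.le hts.le
      · have hlt := h.lt_of_mem_s1 hbt
        exact ihm t htm' hkt htlive (φ t) (h.phi_mem t htpos) (by omega) hφt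

/-- If `S k` and `S j` cross and `k < j`, then `j` is cut out by the segment of a descendant `s`
of `k`, and `S j` and `S s` cross as well. Descending on the unordered pair `{k, j}`, which turns
into `{s, j}`, rules this out; hence the symmetric formulation. -/
theorem no_crossing_aux (h : InteractionSeq V φ) (hwf : WellFounded (Points φ)) {D : ℕ → Prop}
    (hD : IsKernel φ D) (a : ℕ) : ∀ b, D a → D b →
      ¬ (a < b ∧ φ a ≤ φ b ∧ φ b < a) ∧ ¬ (b < a ∧ φ b ≤ φ a ∧ φ a < b) := by
  have key : ∀ k j, D k → D j →
      (∀ s, Relation.TransGen (Points φ) s k → D s → ¬ (j < s ∧ φ j ≤ φ s ∧ φ s < j)) →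
      ¬ (k < j ∧ φ k ≤ φ j ∧ φ j < k) := by
    rintro k j hk hj ih ⟨hkj, h1, h2⟩
    have hjpos : 0 < j := by omega
    refine h.invisible hwf hD k hk j hkj ?_ (φ j) (h.phi_mem j hjpos) h1 h2
    intro s hDs hs hsj hjs
    have hks := h.lt_phi_of_desc hD hk hDs hs
    have hspos : 0 < s := by have := h.lt_of_desc hs; omega
    rcases eq_or_lt_of_le hjs with rfl | hjs
    · omega
    rcases eq_or_lt_of_le hsj with hsj | hsj
    · exact (hD j).1 hj s ⟨hspos, hsj⟩ hDs
    · exact ih s hs hDs ⟨hjs, by omega, hsj⟩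
  induction a using hwf.transGen.induction with
  | _ a iha =>
    intro b
    induction b using hwf.transGen.induction with
    | _ b ihb =>
      intro ha hb
      exact ⟨key a b ha hb fun s hs hDs => (iha s hs b hDs hb).2,
        key b a hb ha fun s hs hDs => (ihb s hs ha hDs).1⟩

theorem no_crossing (h : InteractionSeq V φ) (hwf : WellFounded (Points φ)) {D : ℕ → Prop}
    (hD : IsKernel φ D) {k j : ℕ} (hk : D k) (hj : D j) (hkj : k < j) (h1 : φ k ≤ φ j) :
    k < φ j := by
  by_contra h2
  rcases eq_or_lt_of_le (not_lt.1 h2) with h2 | h2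
  · exact (hD k).1 hk j ⟨by omega, h2⟩ hj
  · exact (h.no_crossing_aux hwf hD k j hk hj).1 ⟨hkj, h1, h2⟩

theorem path_of_wf (h : InteractionSeq V φ) (hwf : WellFounded (Points φ)) :
    ∃ M : ℕ → Prop, (∃ r, (r = 0 ∨ φ r = 0) ∧ M r) ∧ ∀ x, M x → ∃ y, Next φ x y ∧ M y := by
  obtain ⟨D, hD⟩ := exists_kernel hwf
  -- The right ends of the maximal segments of `D`.
  refine ⟨fun n => D n ∧ ∀ j, D j → n < j → n < φ j, ?_, ?_⟩
  · by_cases h0 : D 0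
    · refine ⟨0, .inl rfl, h0, fun j hj hpos => Nat.pos_of_ne_zero fun hφ => ?_⟩
      exact (hD 0).1 h0 j ⟨hpos, hφ⟩ hj
    · obtain ⟨r, hr, hDr⟩ := exists_pointer_of_not hD h0
      exact ⟨r, .inr hr.2, hDr, fun j hj hrj =>
        h.no_crossing hwf hD hDr hj hrj (hr.2 ▸ Nat.zero_le _)⟩
  · rintro x ⟨-, hmax⟩
    have hx1 : ¬ D (x + 1) := fun hx => by
      have h1 := hmax (x + 1) hx (by omega)
      have h2 := h.phi_lt (show 0 < x + 1 by omega)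
      omega
    obtain ⟨y, hy, hDy⟩ := exists_pointer_of_not hD hx1
    have hyx : φ y < y := h.phi_lt hy.1
    have hφy := hy.2
    refine ⟨y, hy, hDy, fun j hj hyj => h.no_crossing hwf hD hDy hj hyj ?_⟩
    have := hmax j hj (by omega)
    omega

end InteractionSeq


/-- For every infinite interaction sequence there is a strictly increasing
sequence `n₀ < n₁ < ⋯` with `φ (n (k+1)) = n k + 1` whose segments
partition `ℕ`. -/
theorem exists_partitioning_sequence (V : ℕ → Finset ℕ) (φ : ℕ → ℕ)
    (h : InteractionSeq V φ) :
    ∃ n : ℕ → ℕ, StrictMono n ∧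
      (∀ k, φ (n (k + 1)) = n k + 1) ∧
      (∀ k l, k ≠ l → Disjoint (Seg φ (n k)) (Seg φ (n l))) ∧
      (∀ m : ℕ, ∃ k, m ∈ Seg φ (n k)) := by
  by_cases hwf : WellFounded (InteractionSeq.Points φ)
  · obtain ⟨M, h0, hs⟩ := h.path_of_wf hwf
    exact h.exists_of_path M h0 hs
  · rw [wellFounded_iff_isEmpty_descending_chain, not_isEmpty_iff] at hwf
    obtain ⟨j, hj⟩ := hwf
    obtain ⟨M, h0, hs⟩ := h.path_of_branch j hj
    exact h.exists_of_path M h0 hs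
end

section
/- For every infinite interaction sequence (V, φ), there exists a strictly increasing sequence of natural numbers n_0 < n_1 < n_2 < ⋯ such that φ(n_{k+1}) = n_k + 1 for all k. -/
/-- `k` is in the derived set of `D` if every `m > 0` with `f m = k` is covered by a segment
`[f j, j]`, `j ∈ D`, lying strictly to the right of `k`. -/
def derived (f : ℕ → ℕ) (D : Set ℕ) : Set ℕ :=
  {k | ∀ m, 0 < m → f m = k → ∃ j ∈ D, k < f j ∧ f j ≤ m ∧ m ≤ j}

/-- Of any two segments `[f i, i]`, `[f j, j]` with `i < j` in `D`, either they are disjoint, or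
the first is contained in the second and the left ends differ. -/
def Laminar (f : ℕ → ℕ) (D : Set ℕ) : Prop :=
  ∀ i ∈ D, ∀ j ∈ D, i < j → f j < f i ∨ i < f j

/-- Laminar sets all of whose elements are definite once the segments of the set are cut out. -/
def Admissible (f : ℕ → ℕ) (D : Set ℕ) : Prop :=
  Laminar f D ∧ D ⊆ derived f D

/-- No segment of `D` contains both `b - 1` and `b`, so `b` can be the left end of a tile. -/
def Exposed (f : ℕ → ℕ) (D : Set ℕ) (b : ℕ) : Prop :=
  ∀ j ∈ D, f j < b → j < b

lemma derived_mono (f : ℕ → ℕ) {D E : Set ℕ} (hDE : D ⊆ E) : derived f D ⊆ derived f E := by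
  intro k hk m hm hfm
  obtain ⟨j, hj, hrest⟩ := hk m hm hfm
  exact ⟨j, hDE hj, hrest⟩

lemma segLeft_of_pos (φ : ℕ → ℕ) {n : ℕ} (hn : 0 < n) : segLeft φ n = φ n := by
  simp [segLeft, hn.ne']

lemma InteractionSeq.lt {V : ℕ → Finset ℕ} {φ : ℕ → ℕ} (h : InteractionSeq V φ) {n v : ℕ}
    (hv : v ∈ V n) : v < n :=
  Finset.mem_range.1 (h.sub n hv)

lemma InteractionSeq.segLeft_mem {V : ℕ → Finset ℕ} {φ : ℕ → ℕ} (h : InteractionSeq V φ)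
    {n : ℕ} (hn : 0 < n) : segLeft φ n ∈ V n := by
  rw [segLeft_of_pos φ hn]
  exact h.phi_mem n hn

lemma InteractionSeq.segLeft_le {V : ℕ → Finset ℕ} {φ : ℕ → ℕ} (h : InteractionSeq V φ)
    (n : ℕ) : segLeft φ n ≤ n := by
  rcases Nat.eq_zero_or_pos n with rfl | hn
  · simp [segLeft]
  · exact (h.lt (h.segLeft_mem hn)).le

lemma InteractionSeq.mem_succ {V : ℕ → Finset ℕ} {φ : ℕ → ℕ} (h : InteractionSeq V φ)
    {n v : ℕ} (hv : v ∈ V (n + 1)) : v = n ∨ v ∈ V (segLeft φ n) := by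
  rcases Nat.eq_zero_or_pos n with rfl | hn
  · left
    simpa [h.V_one] using hv
  · rw [h.V_succ n hn] at hv
    rw [segLeft_of_pos φ hn]
    exact Finset.mem_insert.1 hv

/-- If `k` is definite modulo `D`, then a view after time `k` meets the segment of `k` in `k` at
most, provided its time `n` does not fall strictly inside a segment of `D` to the right of `k`. -/
lemma view_avoids {V : ℕ → Finset ℕ} {φ : ℕ → ℕ} (h : InteractionSeq V φ) {D : Set ℕ}
    (hD : Admissible (segLeft φ) D) (n : ℕ) :
    ∀ k ∈ derived (segLeft φ) D, k < n →
      (∀ j ∈ D, k < segLeft φ j → segLeft φ j < n → j < n) →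
      ∀ v ∈ V n, v < segLeft φ k ∨ k ≤ v := by
  induction n using Nat.strong_induction_on with
  | _ n ih =>
  intro k hk hkn hex v hv
  obtain ⟨m, rfl⟩ : ∃ m, n = m + 1 := ⟨n - 1, by omega⟩
  rcases h.mem_succ hv with rfl | hv
  · right; omega
  rcases Nat.lt_or_ge k m with hkm | hkm
  swap
  · obtain rfl : k = m := by omega
    exact Or.inl (h.lt hv)
  have hlem := h.lt (h.segLeft_mem (show 0 < m by omega))
  by_cases hm : m ∈ D ∧ k < segLeft φ m
  · -- The segment of `m` can be skipped: the view goes on from its left end.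
    refine ih (segLeft φ m) (by omega) k hk hm.2 ?_ v hv
    intro j hj hkj hjm
    by_contra hlt
    rcases lt_trichotomy j m with hjm' | rfl | hjm'
    · have := hD.1 j hj m hm.1 hjm'
      omega
    · omega
    · have := hex j hj hkj (by omega)
      omega
  · have hunc : ∀ j ∈ D, k < segLeft φ j → segLeft φ j ≤ m → j < m := by
      intro j hj hkj hjm
      have h1 := hex j hj hkj (by omega)
      rcases (show j < m ∨ j = m by omega) with h2 | rfl
      · exact h2
      · exact absurd ⟨hj, hkj⟩ hm
    have hne : segLeft φ m ≠ k := by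
      intro he
      obtain ⟨j, hj, h1, h2, h3⟩ := hk m (by omega) he
      have := hunc j hj h1 h2
      omega
    have hmem := h.segLeft_mem (show 0 < m by omega)
    rcases ih m (by omega) k hk hkm (fun j hj h1 h2 => hunc j hj h1 h2.le) _ hmem with h1 | h1
    · exact Or.inl ((h.lt hv).trans h1)
    · refine ih (segLeft φ m) (by omega) k hk (by omega) ?_ v hv
      intro i hi hki him
      by_contra hlt
      have him' := hunc i hi hki (by omega)
      have hile := h.segLeft_le i
      have h2 := ih m (by omega) i (hD.2 hi) him'
        (fun j hj h1 h2 => hunc j hj (by omega) h2.le) _ hmem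
      obtain ⟨j, hj, h3, h4, h5⟩ := hD.2 hi m (by omega) (by omega)
      have := hunc j hj (by omega) h4
      omega

/-- If the segment of `i` has its left end inside that of an earlier `k`, definite modulo `D`, then
some later segment of `D` has its left end inside that of `i`. -/
lemma exists_of_crossing {V : ℕ → Finset ℕ} {φ : ℕ → ℕ} (h : InteractionSeq V φ) {D : Set ℕ}
    (hD : Admissible (segLeft φ) D) {k i : ℕ} (hk : k ∈ derived (segLeft φ) D) (hki : k < i)
    (h1 : segLeft φ k ≤ segLeft φ i) (h2 : segLeft φ i ≤ k) :
    ∃ j ∈ D, i < j ∧ segLeft φ i ≤ segLeft φ j ∧ segLeft φ j ≤ i := by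
  by_contra hcon
  push Not at hcon
  have hunc : ∀ j ∈ D, k < segLeft φ j → segLeft φ j ≤ i → j < i := by
    intro j hj hkj hji
    by_contra hlt
    rcases (show j = i ∨ i < j by omega) with rfl | hij
    · omega
    · have := hcon j hj hij (by omega)
      omega
  have h3 := view_avoids h hD i k hk hki (fun j hj a b => hunc j hj a b.le) _
    (h.segLeft_mem (show 0 < i by omega))
  obtain ⟨j, hj, h4, h5, h6⟩ := hk i (by omega) (by omega)
  have := hunc j hj h4 h5
  omega

lemma Admissible.derived {V : ℕ → Finset ℕ} {φ : ℕ → ℕ} (h : InteractionSeq V φ) {D : Set ℕ}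
    (hD : Admissible (segLeft φ) D) : Admissible (segLeft φ) (derived (segLeft φ) D) := by
  refine ⟨?_, derived_mono _ hD.2⟩
  intro k hk i hi hki
  by_contra hcon
  -- A crossing pair `k, i` gives a crossing pair `i, j` with `j ∈ D`, and this one a crossing
  -- pair `j, l` inside `D`, against laminarity.
  obtain ⟨j, hj, h1, h2, h3⟩ := exists_of_crossing h hD hk hki (by omega) (by omega)
  obtain ⟨l, hl, h4, h5, h6⟩ := exists_of_crossing h hD hi h1 h2 h3
  have := hD.1 j hj l hl h4
  omega

lemma exists_admissible_eq_derived {V : ℕ → Finset ℕ} {φ : ℕ → ℕ} (h : InteractionSeq V φ) :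
    ∃ D : Set ℕ, Laminar (segLeft φ) D ∧ derived (segLeft φ) D = D := by
  obtain ⟨D, hD⟩ := zorn_subset {D | Admissible (segLeft φ) D} (by
    intro c hc hchain
    refine ⟨⋃₀ c, ⟨?_, ?_⟩, fun s hs => Set.subset_sUnion_of_mem hs⟩
    · rintro i ⟨s, hs, hi⟩ j ⟨t, ht, hj⟩ hij
      rcases hchain.total hs ht with hst | hst
      · exact (hc ht).1 i (hst hi) j hj hij
      · exact (hc hs).1 i hi j (hst hj) hij
    · rintro i ⟨s, hs, hi⟩
      exact derived_mono _ (Set.subset_sUnion_of_mem hs) ((hc hs).2 hi))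
  have hDa : Admissible (segLeft φ) D := hD.prop
  exact ⟨D, hDa.1, (hD.eq_of_subset (hDa.derived h) hDa.2).symm⟩

lemma exposed_step {V : ℕ → Finset ℕ} {φ : ℕ → ℕ} (h : InteractionSeq V φ) {D : Set ℕ}
    (hlam : Laminar (segLeft φ) D) (hD : derived (segLeft φ) D = D) {b : ℕ}
    (hb : Exposed (segLeft φ) D b) :
    ∃ m, segLeft φ m = b ∧ Exposed (segLeft φ) D (m + 1) := by
  by_cases hcov : ∃ j ∈ D, segLeft φ j ≤ b ∧ b ≤ j
  · obtain ⟨j, hj, h1, h2⟩ := hcov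
    have hjb : segLeft φ j = b := by
      by_contra hne
      have := hb j hj (by omega)
      omega
    refine ⟨j, hjb, fun i hi hij => ?_⟩
    by_contra hlt
    have h3 := hlam j hj i hi (by omega)
    have := hb i hi (by omega)
    omega
  · have hbD : b ∉ derived (segLeft φ) D := by
      rw [hD]
      exact fun hbD => hcov ⟨b, hbD, h.segLeft_le b, le_rfl⟩
    simp only [derived, Set.mem_ofPred_eq] at hbD
    push Not at hbD
    obtain ⟨m, hm, hmb, hunc⟩ := hbD
    have hle := h.segLeft_le m
    refine ⟨m, hmb, fun i hi him => ?_⟩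
    by_contra hlt
    rcases Nat.lt_or_ge b (segLeft φ i) with h1 | h1
    · have := hunc i hi h1 (by omega)
      omega
    · exact hcov ⟨i, hi, h1, by omega⟩

/-- For every infinite interaction sequence there is a strictly increasing
sequence `n₀ < n₁ < ⋯` with `φ (n (k+1)) = n k + 1`. -/
theorem exists_increasing_sequence (V : ℕ → Finset ℕ) (φ : ℕ → ℕ)
    (h : InteractionSeq V φ) :
    ∃ n : ℕ → ℕ, StrictMono n ∧ ∀ k, φ (n (k + 1)) = n k + 1 := by
  obtain ⟨D, hlam, hD⟩ := exists_admissible_eq_derived h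
  choose g hg hgex using fun b : {b // Exposed (segLeft φ) D b} => exposed_step h hlam hD b.2
  -- `b k` is the left end of the `k`-th tile and `g (b k)` its right end.
  let b : ℕ → {b // Exposed (segLeft φ) D b} := fun k =>
    Nat.rec ⟨0, fun _ _ hlt => absurd hlt (Nat.not_lt_zero _)⟩ (fun _ c => ⟨g c + 1, hgex c⟩) k
  have hstep : ∀ k, segLeft φ (g (b (k + 1))) = g (b k) + 1 := fun k => hg (b (k + 1))
  have hlt : ∀ k, g (b k) < g (b (k + 1)) := by
    intro k
    have h1 := h.segLeft_le (g (b (k + 1)))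
    have h2 := hstep k
    omega
  refine ⟨fun k => g (b k), strictMono_nat_of_lt_succ hlt, fun k => ?_⟩
  rw [← segLeft_of_pos φ (Nat.zero_lt_of_lt (hlt k))]
  exact hstep k
end

section
/- Let F : (ℕ → ℕ) → ℕ be continuous, where ℕ → ℕ carries the product topology with ℕ discrete (Baire space), and let G : ℕ → ℕ. Define recursively f₀ = (fun _ => 0) and f_{n+1} = Function.update f_n x_n (G x_n), where x_n = F(f_n). Then there exist indices m < n with x_m = x_n, i.e., the continuous opponent F eventually answers with a value x that has already been answered before. -/
/-!
Each coordinate `k` of `f n` is `0` until the opponent first answers `k`, and `G k` from then on.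
Hence `f n` converges pointwise, i.e. in the product topology, and by continuity the answers
`F (f n)` converge in the discrete space `ℕ`, so they are eventually constant.
-/

/-- A continuous opponent `F` playing against the updating strategy for
countable choice must eventually repeat an answer. -/
theorem continuous_opponent_repeats (F : (ℕ → ℕ) → ℕ) (hF : Continuous F)
    (G : ℕ → ℕ) (f : ℕ → (ℕ → ℕ))
    (hf0 : f 0 = fun _ => 0)
    (hfs : ∀ n, f (n + 1) = Function.update (f n) (F (f n)) (G (F (f n)))) :
    ∃ m n : ℕ, m < n ∧ F (f m) = F (f n) := by
  have hconv : ∀ k, ∃ a, ∀ᶠ n in Filter.atTop, f n k = a := by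
    intro k
    by_cases h : ∃ n, F (f n) = k
    · obtain ⟨n, hn⟩ := h
      refine ⟨G k, Filter.eventually_atTop.2 ⟨n + 1, fun m hm => ?_⟩⟩
      induction m, hm using Nat.le_induction with
      | base => rw [hfs, hn, Function.update_self]
      | succ m _ ih =>
        rw [hfs, Function.update_apply]
        split_ifs with hk
        · rw [← hk]
        · exact ih
    · push Not at h
      refine ⟨0, Filter.Eventually.of_forall fun m => ?_⟩
      induction m with
      | zero => rw [hf0]
      | succ m ih => rw [hfs, Function.update_of_ne (h m).symm, ih]
  choose g hg using hconv
  have hlim : Filter.Tendsto f Filter.atTop (nhds g) :=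
    tendsto_pi_nhds.2 fun k => tendsto_nhds_of_eventually_eq (hg k)
  have hF' : Filter.Tendsto (fun n => F (f n)) Filter.atTop (nhds (F g)) :=
    (hF.tendsto g).comp hlim
  rw [nhds_discrete, Filter.tendsto_pure] at hF'
  obtain ⟨N, hN⟩ := Filter.eventually_atTop.1 hF'
  exact ⟨N, N + 1, N.lt_succ_self, (hN N le_rfl).trans (hN (N + 1) N.le_succ).symm⟩
end

section
/- Let F : (ℕ → ℕ) → ℕ be continuous, where ℕ → ℕ carries the product topology with ℕ discrete (Baire space). For each n : ℕ, let f_n : ℕ → ℕ be the function defined by f_n(k) = 0 if k < n and f_n(k) = 1 otherwise. Then there exists n : ℕ such that F(f_n) < n; consequently f_n(F(f_n)) = 0 and f_n(n) ≠ 0. -/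
/-! The functions `f n` converge pointwise to the zero function, so by continuity `F (f n)`
is eventually equal to the constant `F 0`; any such `n > F 0` wins. -/

/-- Berardi's second remark: against a continuous opponent `F`, the strategy
playing `f n = (0 below n, 1 from n on)` eventually wins: there is `n` with
`F (f n) < n`, hence `f n (F (f n)) = 0` and `f n n ≠ 0`. -/
theorem strategy_wins_against_continuous (F : (ℕ → ℕ) → ℕ)
    (hF : Continuous F) :
    ∃ n : ℕ,
      F (fun k => if k < n then 0 else 1) < n ∧
      (fun k => if k < n then 0 else 1) (F (fun k => if k < n then 0 else 1)) = 0 ∧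
      (fun k => if k < n then 0 else 1) n ≠ 0 := by
  have hlim : Filter.Tendsto (fun n k : ℕ => if k < n then 0 else 1) Filter.atTop
      (nhds (0 : ℕ → ℕ)) := by
    refine tendsto_pi_nhds.2 fun k => tendsto_const_nhds.congr' ?_
    filter_upwards [Filter.eventually_gt_atTop k] with n hn
    simp [hn]
  have hF0 := (hF.tendsto 0).comp hlim
  -- `ℕ` is discrete, so convergence in it means being eventually constant.
  rw [nhds_discrete, Filter.tendsto_pure] at hF0
  obtain ⟨n, hn, hlt⟩ := (hF0.and (Filter.eventually_gt_atTop (F 0))).exists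
  have h : F (fun k => if k < n then 0 else 1) < n := hn.trans_lt hlt
  exact ⟨n, h, if_pos h, by simp⟩
end
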